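/- Let (g_m)_{m≥1} be a sequence of probability densities on [0,1] and set h_M = g_1 ∗ ··· ∗ g_M (circular convolution). If for every integer n ≠ 0 one has lim_{M→∞} ĝ_1(n)···ĝ_M(n) = 0, then lim_{M→∞} ∫₀¹ |h_M(x) − 1| dx = 0, i.e. h_M converges in L¹([0,1]) to the uniform density. -/

import Mathlib

open MeasureTheory Filter

noncomputable section

/-- A probability density on `[0,1]`: nonnegative, integrable, total integral one. -/
def IsProbDensity (g : ℝ → ℝ) : Prop :=
  (∀ x, 0 ≤ g x) ∧ IntegrableOn g (Set.Icc 0 1) ∧ (∫ x in (0:ℝ)..1, g x) = 1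

/-- Circular convolution on `[0,1]` (the argument is taken modulo 1). -/
def circConv (f g : ℝ → ℝ) : ℝ → ℝ :=
  fun x => ∫ y in (0:ℝ)..1, f y * g (Int.fract (x - y))

/-- The `n`-th Fourier coefficient of `g ∈ L¹([0,1])`. -/
def fourierCoeff01 (g : ℝ → ℝ) (n : ℤ) : ℂ :=
  ∫ x in (0:ℝ)..1, (g x : ℂ) * Complex.exp (-(2 * Real.pi * Complex.I) * n * x)

/-!
In `L¹` of the circle, convolution with a density is a contraction and multiplies the `n`-th Fourier
coefficient by that of the density. Since trigonometric polynomials are dense in `L¹`, convergence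
of all Fourier coefficients of the bounded sequence `h_M` gives convergence of the smoothed sequence
`h_M ∗ v` for every fixed `v ∈ L¹`. The smoothing can be undone because convolutions commute:
`h_M ∗ v - h_M = (h_1 ∗ v - h_1) ∗ g_2 ∗ ⋯ ∗ g_M` has norm at most `‖h_1 ∗ v - h_1‖`, which is small
uniformly in `M` when `v` is taken from an approximate identity.
-/

open AddCircle ContinuousLinearMap Topology
open scoped Convolution

theorem tendsto_clm_of_dense_span {ι 𝕜 E F : Type*} [NontriviallyNormedField 𝕜]
    [NormedAddCommGroup E] [NormedSpace 𝕜 E] [NormedAddCommGroup F] [NormedSpace 𝕜 F]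
    {l : Filter ι} {A : ι → E →L[𝕜] F} {B : E →L[𝕜] F} {C : ℝ} (hA : ∀ i, ‖A i‖ ≤ C)
    {S : Set E} (hS : Dense (Submodule.span 𝕜 S : Set E))
    (hlim : ∀ e ∈ S, Tendsto (A · e) l (𝓝 (B e))) (x : E) : Tendsto (A · x) l (𝓝 (B x)) := by
  have hequi : Equicontinuous ((↑) ∘ A) := by
    have hbdd : ∃ C, ∀ i, ‖A i‖ ≤ C := ⟨C, hA⟩
    exact ((NormedSpace.equicontinuous_TFAE A).out 5 1).1 hbdd
  have hspan : (Submodule.span 𝕜 S : Set E) ⊆ {y | Tendsto (A · y) l (𝓝 (B y))} := by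
    intro y hy
    induction hy using Submodule.span_induction with
    | mem e he => exact hlim e he
    | zero => simp [tendsto_const_nhds]
    | add y z _ _ hy hz => simpa using hy.add hz
    | smul c y _ hy => simpa using hy.const_smul c
  exact closure_minimal hspan (hequi.isClosed_setOfPred_tendsto B.continuous) (hS x)

theorem tendsto_setAverage_of_continuousAt {ι X E : Type*} [TopologicalSpace X]
    [MeasurableSpace X] [OpensMeasurableSpace X] {μ : Measure X} [IsLocallyFiniteMeasure μ]
    [NormedAddCommGroup E] [NormedSpace ℝ E] [CompleteSpace E] {f : X → E} {a : X} {l : Filter ι}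
    {s : ι → Set X} (hf : ContinuousAt f a) (hfm : StronglyMeasurableAtFilter f (𝓝 a) μ)
    (hs : Tendsto s l (𝓝 a).smallSets) (hμ : ∀ᶠ i in l, μ.real (s i) ≠ 0) :
    Tendsto (fun i => ⨍ x in s i, f x ∂μ) l (𝓝 (f a)) := by
  rw [← tendsto_sub_nhds_zero_iff]
  refine (hf.integral_sub_linear_isLittleO_ae hfm hs).tendsto_inv_smul_nhds_zero.congr' ?_
  filter_upwards [hμ] with i hi
  rw [smul_sub, inv_smul_smul₀ hi, setAverage_eq]

section L1Convolution

variable {𝕜 G E E' F : Type*} [NontriviallyNormedField 𝕜]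
  [NormedAddCommGroup E] [NormedSpace 𝕜 E] [NormedAddCommGroup E'] [NormedSpace 𝕜 E']
  [NormedAddCommGroup F] [NormedSpace 𝕜 F] [NormedSpace ℝ F]
  [MeasurableSpace G] {μ : Measure G} [SFinite μ]

section AddGroup

variable [AddGroup G] [MeasurableAdd₂ G] [MeasurableNeg G] [μ.IsAddRightInvariant]

theorem integral_norm_convolution_le (L : E →L[𝕜] E' →L[𝕜] F) {f : G → E} {g : G → E'}
    (hf : Integrable f μ) (hg : Integrable g μ) :
    ∫ x, ‖(f ⋆[L, μ] g) x‖ ∂μ ≤ ‖L‖ * (∫ x, ‖f x‖ ∂μ) * ∫ x, ‖g x‖ ∂μ := by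
  have hnorm : ∀ᵐ x ∂μ, ‖(f ⋆[L, μ] g) x‖ ≤
      ‖L‖ * ((‖f ·‖) ⋆[mul ℝ ℝ, μ] (‖g ·‖)) x := by
    filter_upwards [hf.norm.ae_convolution_exists (mul ℝ ℝ) hg.norm] with x hx
    rw [convolution_def, convolution_def, ← integral_const_mul]
    refine norm_integral_le_of_norm_le (hx.integrable.const_mul _) (ae_of_all _ fun t => ?_)
    rw [mul_apply', ← mul_assoc]
    exact L.le_opNorm₂ _ _
  calc ∫ x, ‖(f ⋆[L, μ] g) x‖ ∂μ
      ≤ ∫ x, ‖L‖ * ((‖f ·‖) ⋆[mul ℝ ℝ, μ] (‖g ·‖)) x ∂μ :=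
        integral_mono_ae (hf.integrable_convolution L hg).norm
          ((hf.norm.integrable_convolution (mul ℝ ℝ) hg.norm).const_mul _) hnorm
    _ = ‖L‖ * (∫ x, ‖f x‖ ∂μ) * ∫ x, ‖g x‖ ∂μ := by
        rw [integral_const_mul, integral_convolution _ hf.norm hg.norm, mul_apply', mul_assoc]

variable [SMulCommClass ℝ 𝕜 F]

/-- The convolution of two classes in `L¹` with respect to a continuous bilinear map `L`, as a
continuous bilinear map. -/
def convolutionL1 (L : E →L[𝕜] E' →L[𝕜] F) : (G →₁[μ] E) →L[𝕜] (G →₁[μ] E') →L[𝕜] (G →₁[μ] F) :=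
  LinearMap.mkContinuous₂
    (LinearMap.mk₂ 𝕜
      (fun u v => ((L1.integrable_coeFn u).integrable_convolution L (L1.integrable_coeFn v)).toL1 _)
      (fun u u' v => by
        rw [← Integrable.toL1_add, Integrable.toL1_eq_toL1_iff,
          convolution_congr L (Lp.coeFn_add u u') .rfl]
        filter_upwards [
          (L1.integrable_coeFn u).ae_convolution_exists L (L1.integrable_coeFn v),
          (L1.integrable_coeFn u').ae_convolution_exists L (L1.integrable_coeFn v)] with x hu hu'
        exact hu.add_distrib hu')
      (fun c u v => by
        rw [← Integrable.toL1_smul', Integrable.toL1_eq_toL1_iff,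
          convolution_congr L (Lp.coeFn_smul c u) .rfl, smul_convolution])
      (fun u v v' => by
        rw [← Integrable.toL1_add, Integrable.toL1_eq_toL1_iff,
          convolution_congr L .rfl (Lp.coeFn_add v v')]
        filter_upwards [
          (L1.integrable_coeFn u).ae_convolution_exists L (L1.integrable_coeFn v),
          (L1.integrable_coeFn u).ae_convolution_exists L (L1.integrable_coeFn v')] with x hv hv'
        exact hv.distrib_add hv')
      (fun c u v => by
        rw [← Integrable.toL1_smul', Integrable.toL1_eq_toL1_iff,
          convolution_congr L .rfl (Lp.coeFn_smul c v), convolution_smul]))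
    ‖L‖ fun u v => by
      rw [LinearMap.mk₂_apply, L1.norm_of_fun_eq_integral_norm, L1.norm_eq_integral_norm,
        L1.norm_eq_integral_norm]
      exact integral_norm_convolution_le L (L1.integrable_coeFn u) (L1.integrable_coeFn v)

theorem coeFn_convolutionL1 (L : E →L[𝕜] E' →L[𝕜] F) (u : G →₁[μ] E) (v : G →₁[μ] E') :
    convolutionL1 L u v =ᵐ[μ] u ⋆[L, μ] v :=
  ((L1.integrable_coeFn u).integrable_convolution L (L1.integrable_coeFn v)).coeFn_toL1

theorem convolutionL1_toL1 (L : E →L[𝕜] E' →L[𝕜] F) {f : G → E} {g : G → E'}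
    (hf : Integrable f μ) (hg : Integrable g μ) :
    convolutionL1 L (hf.toL1 f) (hg.toL1 g) = (hf.integrable_convolution L hg).toL1 _ := by
  refine Lp.ext ((coeFn_convolutionL1 L _ _).trans ?_)
  rw [convolution_congr L hf.coeFn_toL1 hg.coeFn_toL1]
  exact (Integrable.coeFn_toL1 _).symm

theorem norm_convolutionL1_le (L : E →L[𝕜] E' →L[𝕜] F) :
    ‖(convolutionL1 L : (G →₁[μ] E) →L[𝕜] (G →₁[μ] E') →L[𝕜] (G →₁[μ] F))‖ ≤ ‖L‖ :=
  LinearMap.mkContinuous₂_norm_le _ (norm_nonneg L) _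

end AddGroup

theorem convolutionL1_flip [SMulCommClass ℝ 𝕜 F] [AddCommGroup G] [MeasurableAdd₂ G]
    [MeasurableNeg G] [μ.IsAddLeftInvariant] [μ.IsNegInvariant] (L : E →L[𝕜] E' →L[𝕜] F)
    (u : G →₁[μ] E) (v : G →₁[μ] E') : convolutionL1 L.flip v u = convolutionL1 L u v := by
  refine Lp.ext ((coeFn_convolutionL1 _ _ _).trans ?_)
  rw [convolution_flip]
  exact (coeFn_convolutionL1 L u v).symm

end L1Convolution

theorem fourier_sub_apply {T : ℝ} (n : ℤ) (x t : AddCircle T) :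
    fourier n (x - t) = fourier n x * fourier (-n) t := by
  simp [sub_eq_add_neg, smul_add, toCircle_add]

section Circle

variable {T : ℝ} [Fact (0 < T)]

local notation "L¹" => AddCircle T →₁[haarAddCircle] ℂ

local infixl:70 " ⋆₁ " => convolutionL1 (mul ℂ ℂ)

theorem dense_span_range_fourierLp_one :
    Dense (Submodule.span ℂ (Set.range (fourierLp (T := T) 1)) : Set (L¹)) :=
  Submodule.dense_iff_topologicalClosure_eq_top.2
    (span_fourierLp_closure_eq_top ENNReal.one_ne_top)

theorem convolution_fourier (f : AddCircle T → ℂ) (n : ℤ) :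
    f ⋆[mul ℂ ℂ, haarAddCircle] fourier n = fourierCoeff f n • ⇑(fourier n) := by
  ext x
  rw [convolution_def, fourierCoeff, Pi.smul_apply, ← integral_smul_const]
  refine integral_congr_ae (ae_of_all _ fun t => ?_)
  simp only [mul_apply', fourier_sub_apply, smul_eq_mul]
  ring

theorem fourierCoeff_convolution {f g : AddCircle T → ℂ} (hf : Integrable f haarAddCircle)
    (hg : Integrable g haarAddCircle) (n : ℤ) :
    fourierCoeff (f ⋆[mul ℂ ℂ, haarAddCircle] g) n = fourierCoeff f n * fourierCoeff g n := by
  have hmodulate : ∀ x, fourier (-n) x • (f ⋆[mul ℂ ℂ, haarAddCircle] g) x =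
      ((fun t => fourier (-n) t • f t) ⋆[mul ℂ ℂ, haarAddCircle]
        fun t => fourier (-n) t • g t) x := by
    intro x
    rw [convolution_def, convolution_def, ← integral_smul]
    refine integral_congr_ae (ae_of_all _ fun t => ?_)
    have hsplit : fourier (-n) t * fourier (-n) (x - t) = fourier (-n) x := by
      rw [fourier_sub_apply, neg_neg, mul_left_comm, ← fourier_add, neg_add_cancel, fourier_zero,
        mul_one]
    simp only [mul_apply', smul_eq_mul, ← hsplit]
    ring
  simp only [fourierCoeff, hmodulate]
  rw [integral_convolution _ (hf.fourier_smul _) (hg.fourier_smul _), mul_apply']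

theorem fourierCoeff_convolutionL1 (u v : L¹) (n : ℤ) :
    fourierCoeff (u ⋆₁ v) n = fourierCoeff u n * fourierCoeff v n := by
  rw [fourierCoeff_congr_ae (coeFn_convolutionL1 _ _ _),
    fourierCoeff_convolution (L1.integrable_coeFn u) (L1.integrable_coeFn v)]

theorem convolutionL1_fourierLp (u : L¹) (n : ℤ) :
    u ⋆₁ fourierLp 1 n = fourierCoeff u n • fourierLp 1 n := by
  refine Lp.ext ((coeFn_convolutionL1 _ _ _).trans ?_)
  rw [convolution_congr _ .rfl (coeFn_fourierLp 1 n), convolution_fourier]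
  exact ((coeFn_fourierLp 1 n).const_smul _).symm.trans (Lp.coeFn_smul _ _).symm

theorem convolutionL1_comm (u v : L¹) : u ⋆₁ v = v ⋆₁ u := by
  rw [← convolutionL1_flip, flip_mul]

theorem convolutionL1_right_comm (u v w : L¹) : u ⋆₁ v ⋆₁ w = u ⋆₁ w ⋆₁ v := by
  let conv : L¹ →L[ℂ] L¹ →L[ℂ] L¹ := convolutionL1 (mul ℂ ℂ)
  suffices conv (u ⋆₁ v) = (conv.flip v).comp (conv u) from DFunLike.congr_fun this w
  refine ContinuousLinearMap.ext_on dense_span_range_fourierLp_one ?_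
  rintro _ ⟨n, rfl⟩
  calc u ⋆₁ v ⋆₁ fourierLp 1 n
      = fourierCoeff u n • fourierCoeff v n • fourierLp 1 n := by
        rw [convolutionL1_fourierLp, fourierCoeff_convolutionL1, mul_smul]
    _ = conv.flip v (u ⋆₁ fourierLp 1 n) := by
        rw [convolutionL1_fourierLp u, map_smul, flip_apply, convolutionL1_comm,
          convolutionL1_fourierLp]

theorem norm_convolutionL1_left_le (u : L¹) :
    ‖(convolutionL1 (mul ℂ ℂ) u : L¹ →L[ℂ] L¹)‖ ≤ ‖u‖ := by
  simpa only [one_mul] using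
    le_of_opNorm_le _ ((norm_convolutionL1_le (mul ℂ ℂ)).trans (opNorm_mul_le ℂ ℂ)) u

theorem norm_convolutionL1_apply_le (u v : L¹) : ‖u ⋆₁ v‖ ≤ ‖u‖ * ‖v‖ :=
  le_of_opNorm_le _ (norm_convolutionL1_left_le u) v

/-- The density of the uniform distribution on the closed ball of radius `r` about `0`, as an
element of `L¹` of the circle (`0` if the ball is null). It is an approximate identity for
convolution as `r → 0`. -/
def uniformBallL1 (r : ℝ) : L¹ :=
  indicatorConstLp 1 (s := Metric.closedBall 0 r) measurableSet_closedBall (measure_ne_top _ _)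
    (haarAddCircle.real (Metric.closedBall (0 : AddCircle T) r) : ℂ)⁻¹

theorem norm_uniformBallL1_le (r : ℝ) : ‖(uniformBallL1 r : L¹)‖ ≤ 1 := by
  rw [uniformBallL1, norm_indicatorConstLp one_ne_zero ENNReal.one_ne_top]
  simpa [abs_of_nonneg] using inv_mul_le_one

theorem fourierCoeff_uniformBallL1 (r : ℝ) (n : ℤ) :
    fourierCoeff (uniformBallL1 r : L¹) n =
      ⨍ x in Metric.closedBall (0 : AddCircle T) r, fourier (-n) x ∂haarAddCircle := by
  rw [uniformBallL1, fourierCoeff_congr_ae indicatorConstLp_coeFn, fourierCoeff, setAverage_eq,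
    ← integral_indicator measurableSet_closedBall, ← integral_smul]
  refine integral_congr_ae (ae_of_all _ fun x => ?_)
  by_cases hx : x ∈ Metric.closedBall 0 r <;> simp [hx, mul_comm]

theorem tendsto_fourierCoeff_uniformBallL1 (n : ℤ) :
    Tendsto (fun r => fourierCoeff (uniformBallL1 r : L¹) n) (𝓝[>] 0) (𝓝 1) := by
  simp only [fourierCoeff_uniformBallL1]
  have hcont : Continuous (fourier (-n) : AddCircle T → ℂ) := map_continuous _
  have hlim := tendsto_setAverage_of_continuousAt (μ := haarAddCircle) hcont.continuousAt
    hcont.stronglyMeasurable.stronglyMeasurableAtFilter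
    ((tendsto_closedBall_smallSets (0 : AddCircle T)).mono_left
      (nhdsWithin_le_nhds (s := Set.Ioi 0))) ?_
  · simpa using hlim
  · filter_upwards [self_mem_nhdsWithin] with r hr
    exact (measureReal_ne_zero_iff (measure_ne_top _ _)).2
      (Metric.measure_closedBall_pos _ _ hr).ne'

theorem tendsto_convolutionL1_uniformBallL1 (u : L¹) :
    Tendsto (fun r => u ⋆₁ uniformBallL1 r) (𝓝[>] 0) (𝓝 u) := by
  simp only [convolutionL1_comm u]
  refine tendsto_clm_of_dense_span (B := ContinuousLinearMap.id ℂ _)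
    (fun r => (norm_convolutionL1_left_le _).trans (norm_uniformBallL1_le r))
    dense_span_range_fourierLp_one ?_ u
  rintro _ ⟨n, rfl⟩
  simpa only [convolutionL1_fourierLp, one_smul, ContinuousLinearMap.id_apply] using
    (tendsto_fourierCoeff_uniformBallL1 n).smul_const (fourierLp (T := T) 1 n)

theorem norm_le_norm_zero_of_convolutionL1_rec {F G : ℕ → L¹} (hF : ∀ M, F (M + 1) = F M ⋆₁ G M)
    (hG : ∀ M, ‖G M‖ ≤ 1) (M : ℕ) : ‖F M‖ ≤ ‖F 0‖ := by
  refine antitone_nat_of_succ_le (f := fun M => ‖F M‖) (fun M => ?_) M.zero_le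
  rw [hF]
  exact (norm_convolutionL1_apply_le _ _).trans (mul_le_of_le_one_right (norm_nonneg _) (hG M))

theorem tendsto_of_convolutionL1_rec {F G : ℕ → L¹} {u : L¹}
    (hF : ∀ M, F (M + 1) = F M ⋆₁ G M) (hG : ∀ M, ‖G M‖ ≤ 1)
    (hcoeff : ∀ n, Tendsto (fun M => fourierCoeff (F M) n) atTop (𝓝 (fourierCoeff u n))) :
    Tendsto F atTop (𝓝 u) := by
  have hsmooth (v : L¹) : Tendsto (fun M => F M ⋆₁ v) atTop (𝓝 (u ⋆₁ v)) := by
    refine tendsto_clm_of_dense_span (A := fun M => convolutionL1 (mul ℂ ℂ) (F M)) (C := ‖F 0‖)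
      (fun M => ?_) dense_span_range_fourierLp_one ?_ v
    · exact (norm_convolutionL1_left_le _).trans (norm_le_norm_zero_of_convolutionL1_rec hF hG M)
    · rintro _ ⟨n, rfl⟩
      simpa only [convolutionL1_fourierLp] using (hcoeff n).smul_const _
  have hdist (v : L¹) (M : ℕ) : ‖F M ⋆₁ v - F M‖ ≤ ‖F 0 ⋆₁ v - F 0‖ := by
    refine norm_le_norm_zero_of_convolutionL1_rec (F := fun M => F M ⋆₁ v - F M) (fun M => ?_) hG M
    simp only [hF, convolutionL1_right_comm, map_sub, sub_apply]
  have hunif : TendstoUniformly (fun r M => F M ⋆₁ uniformBallL1 r) F (𝓝[>] 0) := by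
    refine Metric.tendstoUniformly_iff.2 fun ε hε => ?_
    filter_upwards [Metric.tendsto_nhds.1 (tendsto_convolutionL1_uniformBallL1 (F 0)) ε hε]
      with r hr M
    rw [dist_eq_norm] at hr
    rw [dist_comm, dist_eq_norm]
    exact (hdist _ M).trans_lt hr
  exact hunif.tendsto_of_eventually_tendsto (.of_forall fun r => hsmooth _)
    (tendsto_convolutionL1_uniformBallL1 u)

end Circle

/-- The complex-valued function on the circle `ℝ/ℤ` which agrees with `f` on `[0, 1)`. -/
def circleLift (f : ℝ → ℝ) : AddCircle (1 : ℝ) → ℂ :=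
  liftIco 1 0 fun x => (f x : ℂ)

theorem circleLift_coe (f : ℝ → ℝ) (x : ℝ) : circleLift f x = f (Int.fract x) := by
  change (f (equivIco 1 0 (x : AddCircle (1 : ℝ))) : ℂ) = _
  rw [coe_equivIco_mk_apply, div_one, mul_one]

theorem circleLift_coe_of_mem_Ioo (f : ℝ → ℝ) {x : ℝ} (hx : x ∈ Set.Ioo 0 1) :
    circleLift f x = f x := by
  rw [circleLift_coe, Int.fract_eq_self.2 ⟨hx.1.le, hx.2⟩]

theorem integral_haarAddCircle_eq_intervalIntegral {E : Type*} [NormedAddCommGroup E]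
    [NormedSpace ℝ E] {F : AddCircle (1 : ℝ) → E} {f : ℝ → E}
    (hF : ∀ x ∈ Set.Ioo (0 : ℝ) 1, F x = f x) :
    ∫ x, F x ∂haarAddCircle = ∫ x in (0 : ℝ)..1, f x := by
  rw [integral_haarAddCircle, inv_one, one_smul, ← AddCircle.intervalIntegral_preimage 1 0,
    zero_add]
  exact intervalIntegral.integral_congr_Ioo_of_le zero_le_one hF

theorem integrable_circleLift {f : ℝ → ℝ} (hf : IntegrableOn f (Set.Icc 0 1)) :
    Integrable (circleLift f) haarAddCircle := by
  have hlift : circleLift f = liftIoc 1 0 fun x => (f (Int.fract x) : ℂ) := by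
    ext x
    obtain ⟨a, ha, rfl⟩ : ∃ a ∈ Set.Ioc (0 : ℝ) (0 + 1), (a : AddCircle (1 : ℝ)) = x :=
      ⟨_, (equivIoc 1 0 x).2, coe_equivIoc⟩
    rw [liftIoc_coe_apply ha, circleLift_coe]
  have hfract : IntegrableOn (fun x => f (Int.fract x)) (Set.Ioc 0 1) := by
    rw [← integrableOn_Icc_iff_integrableOn_Ioc, integrableOn_Icc_iff_integrableOn_Ico]
    exact (hf.mono_set Set.Ico_subset_Icc_self).congr_fun
      (fun x hx => by rw [Int.fract_eq_self.2 hx]) measurableSet_Ico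
  rw [← memLp_one_iff_integrable, hlift]
  refine MemLp.haarAddCircle (MemLp.memLp_liftIoc ?_)
  rw [memLp_one_iff_integrable, zero_add]
  exact hfract.ofReal

theorem circleLift_circConv (f g : ℝ → ℝ) :
    circleLift (circConv f g) = circleLift f ⋆[mul ℂ ℂ, haarAddCircle] circleLift g := by
  ext x
  obtain ⟨a, rfl⟩ := QuotientAddGroup.mk_surjective x
  rw [circleLift_coe, circConv, ← intervalIntegral.integral_ofReal, convolution_def]
  refine (integral_haarAddCircle_eq_intervalIntegral fun y hy => ?_).symm
  have hfract : Int.fract (Int.fract a - y) = Int.fract (a - y) := by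
    rw [← Int.self_sub_floor a, sub_right_comm, Int.fract_sub_intCast]
  rw [mul_apply', ← AddCircle.coe_sub, circleLift_coe_of_mem_Ioo f hy, circleLift_coe, hfract,
    Complex.ofReal_mul]

theorem fourierCoeff_circleLift (f : ℝ → ℝ) (n : ℤ) :
    fourierCoeff (circleLift f) n = fourierCoeff01 f n := by
  refine integral_haarAddCircle_eq_intervalIntegral fun x hx => ?_
  rw [circleLift_coe_of_mem_Ioo f hx, fourier_coe_apply, smul_eq_mul, mul_comm]
  congr 2
  push_cast
  ring

theorem fourierCoeff01_circConv {f g : ℝ → ℝ} (hf : Integrable (circleLift f) haarAddCircle)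
    (hg : Integrable (circleLift g) haarAddCircle) (n : ℤ) :
    fourierCoeff01 (circConv f g) n = fourierCoeff01 f n * fourierCoeff01 g n := by
  simp only [← fourierCoeff_circleLift, circleLift_circConv, fourierCoeff_convolution hf hg]

theorem integral_norm_circleLift (f : ℝ → ℝ) :
    ∫ x, ‖circleLift f x‖ ∂haarAddCircle = ∫ x in (0 : ℝ)..1, |f x| := by
  refine integral_haarAddCircle_eq_intervalIntegral fun x hx => ?_
  rw [circleLift_coe_of_mem_Ioo f hx, Complex.norm_real, Real.norm_eq_abs]

theorem norm_toL1_circleLift_sub {f g : ℝ → ℝ} (hf : Integrable (circleLift f) haarAddCircle)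
    (hg : Integrable (circleLift g) haarAddCircle) :
    ‖hf.toL1 _ - hg.toL1 _‖ = ∫ x in (0 : ℝ)..1, |f x - g x| := by
  have hsub : circleLift f - circleLift g = circleLift (f - g) := by
    ext x
    exact (Complex.ofReal_sub _ _).symm
  rw [← Integrable.toL1_sub, L1.norm_of_fun_eq_integral_norm, hsub, integral_norm_circleLift]
  rfl

theorem fourierCoeff01_one : fourierCoeff01 1 = Pi.single 0 1 := by
  have hone : circleLift 1 = fourier 0 := by
    ext x
    simp [circleLift, liftIco]
  ext n
  rw [← fourierCoeff_circleLift, hone, fourierCoeff_fourier]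

theorem integrable_circleLift_of_circConv_rec {f g : ℕ → ℝ → ℝ}
    (hf : IntegrableOn (f 0) (Set.Icc 0 1)) (hg : ∀ M, IntegrableOn (g M) (Set.Icc 0 1))
    (hrec : ∀ M, f (M + 1) = circConv (f M) (g M)) (M : ℕ) :
    Integrable (circleLift (f M)) haarAddCircle := by
  induction M with
  | zero => exact integrable_circleLift hf
  | succ M ih =>
    rw [hrec, circleLift_circConv]
    exact ih.integrable_convolution _ (integrable_circleLift (hg M))

theorem tendsto_integral_abs_sub_of_circConv_rec {f g : ℕ → ℝ → ℝ} {k : ℝ → ℝ}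
    (hf : IntegrableOn (f 0) (Set.Icc 0 1)) (hg : ∀ M, IntegrableOn (g M) (Set.Icc 0 1))
    (hg_norm : ∀ M, ∫ x in (0 : ℝ)..1, |g M x| ≤ 1) (hk : IntegrableOn k (Set.Icc 0 1))
    (hrec : ∀ M, f (M + 1) = circConv (f M) (g M))
    (hcoeff : ∀ n, Tendsto (fun M => fourierCoeff01 (f M) n) atTop (𝓝 (fourierCoeff01 k n))) :
    Tendsto (fun M => ∫ x in (0 : ℝ)..1, |f M x - k x|) atTop (𝓝 0) := by
  have hf' := integrable_circleLift_of_circConv_rec hf hg hrec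
  have hlim : Tendsto (fun M => (hf' M).toL1 _) atTop
      (𝓝 ((integrable_circleLift hk).toL1 _)) := by
    refine tendsto_of_convolutionL1_rec
      (G := fun M => (integrable_circleLift (hg M)).toL1 _) (fun M => ?_) (fun M => ?_) fun n => ?_
    · simp only [convolutionL1_toL1, ← circleLift_circConv, hrec]
    · rw [L1.norm_of_fun_eq_integral_norm, integral_norm_circleLift]
      exact hg_norm M
    · simpa only [fourierCoeff_congr_ae (Integrable.coeFn_toL1 _), fourierCoeff_circleLift]
        using hcoeff n
  simpa only [norm_toL1_circleLift_sub] using tendsto_iff_norm_sub_tendsto_zero.1 hlim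

theorem IsProbDensity.fourierCoeff01_zero {f : ℝ → ℝ} (hf : IsProbDensity f) :
    fourierCoeff01 f 0 = 1 := by
  simp [fourierCoeff01, intervalIntegral.integral_ofReal, hf.2.2]

theorem IsProbDensity.integral_abs {f : ℝ → ℝ} (hf : IsProbDensity f) :
    ∫ x in (0 : ℝ)..1, |f x| = 1 := by
  simpa only [abs_of_nonneg (hf.1 _)] using hf.2.2

/-- If for every nonzero integer `n` the products of Fourier coefficients
`ĝ₁(n)⋯ĝ_M(n)` tend to `0`, then the circular convolutions `h M = g 1 ∗ ⋯ ∗ g M`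
converge in `L¹([0,1])` to the uniform density `1`. -/
theorem modOneCLT_sufficiency (g : ℕ → ℝ → ℝ) (hg : ∀ m, 1 ≤ m → IsProbDensity (g m))
    (h : ℕ → ℝ → ℝ) (h1 : h 1 = g 1)
    (hrec : ∀ M, 1 ≤ M → h (M + 1) = circConv (h M) (g (M + 1)))
    (hfour : ∀ n : ℤ, n ≠ 0 →
      Tendsto (fun M => ∏ m ∈ Finset.Icc 1 M, fourierCoeff01 (g m) n) atTop (nhds 0)) :
    Tendsto (fun M => ∫ x in (0:ℝ)..1, |h M x - 1|) atTop (nhds 0) := by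
  have hg_int (M : ℕ) : IntegrableOn (g (M + 2)) (Set.Icc 0 1) := (hg _ (M + 1).succ_pos).2.1
  have hh_int : IntegrableOn (h (0 + 1)) (Set.Icc 0 1) := h1 ▸ (hg 1 le_rfl).2.1
  have hh_rec (M : ℕ) : h (M + 1 + 1) = circConv (h (M + 1)) (g (M + 2)) := hrec _ M.succ_pos
  have hcoeff (n : ℤ) (M : ℕ) :
      fourierCoeff01 (h (M + 1)) n = ∏ m ∈ Finset.Icc 1 (M + 1), fourierCoeff01 (g m) n := by
    induction M with
    | zero => simp [h1]
    | succ M ih =>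
      rw [hh_rec, fourierCoeff01_circConv
        (integrable_circleLift_of_circConv_rec (f := fun M => h (M + 1)) hh_int hg_int hh_rec M)
        (integrable_circleLift (hg_int M)), ih, Finset.prod_Icc_succ_top (M + 1).succ_pos]
  refine (tendsto_add_atTop_iff_nat 1).1 (tendsto_integral_abs_sub_of_circConv_rec (k := 1) hh_int
    hg_int (fun M => (hg _ (M + 1).succ_pos).integral_abs.le) continuous_one.integrableOn_Icc
    hh_rec fun n => ?_)
  simp only [hcoeff, fourierCoeff01_one]
  rcases eq_or_ne n 0 with rfl | hn
  · rw [Pi.single_eq_same]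
    exact tendsto_const_nhds.congr fun M => (Finset.prod_eq_one fun m hm =>
      (hg m (Finset.mem_Icc.1 hm).1).fourierCoeff01_zero).symm
  · rw [Pi.single_eq_of_ne hn]
    exact (hfour n hn).comp (tendsto_add_atTop_nat 1)

end
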